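/- Let α ∈ Φ^l be (4,…,4)-regular and suppose ord_{ij}α = −2 for some 1 ≤ i < j ≤ l. Then ρ^{(−2)}_{ij}α, regarded as a rational function of the l−1 variables z₁,…,ẑ_i,…,z_l, is (4,…,4)-regular (with respect to these l−1 variables). -/

import Mathlib

open scoped Classical

noncomputable section

namespace Griess

open MvPolynomial

variable {k : Type} [Field k]

/-- The field `k(z₁,…,z_l)` of rational functions over `k` in `l` variables. -/
abbrev RF (k : Type) [Field k] (l : ℕ) : Type := FractionRing (MvPolynomial (Fin l) k)

/-- The variable `zᵢ` as an element of the rational function field. -/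
def zv {k : Type} [Field k] {l : ℕ} (i : Fin l) : RF k l :=
  algebraMap (MvPolynomial (Fin l) k) (RF k l) (MvPolynomial.X i)

/-- The space `Φ^l` of rational functions of the form
`p(z₁,…,z_l) · ∏_{i<j} (zᵢ - z_j)^{k_{ij}}`. -/
def Phi (k : Type) [Field k] (l : ℕ) : Set (RF k l) :=
  { x | ∃ (p : MvPolynomial (Fin l) k) (e : Fin l → Fin l → ℤ),
      x = algebraMap (MvPolynomial (Fin l) k) (RF k l) p *
        ∏ i : Fin l, ∏ j : Fin l, (if i < j then (zv i - zv j) ^ e i j else 1) }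

/-- `D` is the family of partial derivative operators `∂_{z₁},…,∂_{z_l}`:
a family of `k`-linear derivations with `D i (z j) = δ_{ij}`. -/
def IsPartialDeriv {l : ℕ} (D : Fin l → Derivation k (RF k l) (RF k l)) : Prop :=
  ∀ i j : Fin l, D i (zv j) = if j = i then 1 else 0

/-- The operator `Δ = Σᵢ ∂_{zᵢ}`. -/
def Delta {l : ℕ} (D : Fin l → Derivation k (RF k l) (RF k l)) (α : RF k l) : RF k l :=
  ∑ i, D i α

/-- The operator `Δ*(n₁,…,n_l) = Σᵢ (zᵢ² ∂_{zᵢ} + nᵢ zᵢ)`. -/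
def DeltaStar {l : ℕ} (D : Fin l → Derivation k (RF k l) (RF k l)) (n : Fin l → ℤ)
    (α : RF k l) : RF k l :=
  ∑ i, ((zv i) ^ 2 * D i α + (n i : RF k l) * zv i * α)

section Subst

variable {l : ℕ}

/-- The embedding of polynomials in `z₁,…,z_l` into rational functions of
`z₁,…,z_l` and one extra variable `t` (`= RatFunc.X`). -/
def toRatFuncHom (k : Type) [Field k] (l : ℕ) :
    Polynomial (MvPolynomial (Fin l) k) →+* RatFunc (RF k l) :=
  (algebraMap (Polynomial (RF k l)) (RatFunc (RF k l))).comp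
    (Polynomial.mapRingHom (algebraMap (MvPolynomial (Fin l) k) (RF k l)))

lemma toRatFuncHom_injective : Function.Injective (toRatFuncHom k l) := by
  have h1 : Function.Injective (algebraMap (Polynomial (RF k l)) (RatFunc (RF k l))) :=
    IsFractionRing.injective _ _
  have h2 : Function.Injective
      (Polynomial.mapRingHom (algebraMap (MvPolynomial (Fin l) k) (RF k l))) :=
    Polynomial.map_injective _ (IsFractionRing.injective _ _)
  exact fun a b hab => h2 (h1 hab)

/-- Polynomial level substitution `z_j ↦ t·z_j` for `j ∈ J`. -/
def scaleAux (k : Type) [Field k] (l : ℕ) (J : Finset (Fin l)) :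
    MvPolynomial (Fin l) k →+* Polynomial (MvPolynomial (Fin l) k) :=
  (MvPolynomial.aeval (R := k) fun i =>
    if i ∈ J then Polynomial.X * Polynomial.C (MvPolynomial.X i)
    else Polynomial.C (MvPolynomial.X i)).toRingHom

lemma scaleAux_injective (J : Finset (Fin l)) :
    Function.Injective (scaleAux k l J) := by
  have h : (Polynomial.evalRingHom (1 : MvPolynomial (Fin l) k)).comp (scaleAux k l J)
      = RingHom.id _ := by
    apply MvPolynomial.ringHom_ext
    · intro r; simp [scaleAux]
    · intro i; by_cases hi : i ∈ J <;> simp [scaleAux, hi]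
  intro p q hpq
  have hp := DFunLike.congr_fun h p
  have hq := DFunLike.congr_fun h q
  simp only [RingHom.comp_apply, RingHom.id_apply] at hp hq
  rw [← hp, ← hq, hpq]

/-- The substitution `z_j ↦ t·z_j` (for `j ∈ J`), as a map from rational functions
in `z₁,…,z_l` to rational functions in `z₁,…,z_l` and `t`.  Reading off the
coefficients of the Laurent expansion in `t` at `t = 0` of `scaleJ J α` yields the
decomposition of `α` into its homogeneous components with respect to the total degree
in the variables `{z_j : j ∈ J}`, i.e. the expansion of `α` in the domain where the
variables of `J` are much smaller than the remaining variables. -/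
def scaleJ (J : Finset (Fin l)) : RF k l →+* RatFunc (RF k l) :=
  IsFractionRing.lift (g := (toRatFuncHom k l).comp (scaleAux k l J))
    (fun a b hab => scaleAux_injective J (toRatFuncHom_injective hab))

/-- Polynomial level substitution `z_i ↦ z_j + t`. -/
def subPairAux (k : Type) [Field k] (l : ℕ) (i j : Fin l) :
    MvPolynomial (Fin l) k →+* Polynomial (MvPolynomial (Fin l) k) :=
  (MvPolynomial.aeval (R := k) fun s =>
    if s = i then Polynomial.X + Polynomial.C (MvPolynomial.X j)
    else Polynomial.C (MvPolynomial.X s)).toRingHom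

lemma subPairAux_injective (i j : Fin l) :
    Function.Injective (subPairAux k l i j) := by
  have h : (Polynomial.evalRingHom (MvPolynomial.X i - MvPolynomial.X j)).comp
      (subPairAux k l i j) = RingHom.id _ := by
    apply MvPolynomial.ringHom_ext
    · intro r; simp [subPairAux]
    · intro s; by_cases hs : s = i <;> simp [subPairAux, hs]
  intro p q hpq
  have hp := DFunLike.congr_fun h p
  have hq := DFunLike.congr_fun h q
  simp only [RingHom.comp_apply, RingHom.id_apply] at hp hq
  rw [← hp, ← hq, hpq]

/-- The substitution `z_i ↦ z_j + t`, as a map from rational functions in `z₁,…,z_l`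
to rational functions in the variables `z₁,…,z_l` and `t`.  Reading off the Laurent
coefficients in `t` at `t = 0` yields the expansion of a rational function in powers
of `z_i - z_j`, with coefficients not involving `z_i`. -/
def subPair (i j : Fin l) : RF k l →+* RatFunc (RF k l) :=
  IsFractionRing.lift (g := (toRatFuncHom k l).comp (subPairAux k l i j))
    (fun a b hab => subPairAux_injective i j (toRatFuncHom_injective hab))

end Subst

/-- The coefficient of `tᵐ` in the Laurent expansion at `t = 0` of a rational
function of `t`. -/
def lcoeff {L : Type} [Field L] (m : ℤ) (f : RatFunc L) : L :=
  (f : LaurentSeries L).coeff m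

/-- The component `(α)_n` of `α` of degree `n` with respect to the partition
`{1,…,l} = Jᶜ ⊔ J` and the weights `d`:  the part of the expansion of `α` in the
domain where the variables of `J` are much smaller than those of `Jᶜ` whose total
degree in the variables `{z_j : j ∈ J}` equals `n - Σ_{j∈J} d_j`. -/
def component {l : ℕ} (J : Finset (Fin l)) (d : Fin l → ℤ) (n : ℤ) (α : RF k l) :
    RF k l :=
  lcoeff (n - ∑ j ∈ J, d j) (scaleJ J α)

/-- `α` is homogeneous of total degree `d` in the variables `{z_i : i ∈ S}`:
substituting `z_i ↦ t·z_i` for `i ∈ S` multiplies `α` by `t^d`. -/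
def IsHomogeneousOn {l : ℕ} (S : Finset (Fin l)) (d : ℤ) (α : RF k l) : Prop :=
  scaleJ S α = RatFunc.X ^ d * RatFunc.C α

/-- `ρ^{(m)}_{ij} α`: the coefficient of `(z_i - z_j)^m` in the expansion of `α`
in powers of `z_i - z_j` (the coefficients do not involve `z_i`). -/
def rho {l : ℕ} (i j : Fin l) (m : ℤ) (α : RF k l) : RF k l :=
  lcoeff m (subPair i j α)

/-- `α` is a rational function of the variables `{z_i : i ∈ S}` only. -/
def dependsOnlyOn {l : ℕ} (S : Finset (Fin l)) (α : RF k l) : Prop :=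
  α ∈ Subfield.closure (Set.range (algebraMap k (RF k l)) ∪ {x | ∃ i ∈ S, x = zv i})

/-- `α` is an admissible function of the variables `{z_i : i ∈ S}` (the space
`R^{|S|}`):  `α ∈ Φ` is a rational function of the variables of `S` only, it is
`(4,…,4)`-regular and homogeneous of degree `-2|S|` in these variables, and all its
components of negative degree, as well as those of degree `1`, vanish (with respect
to every partition of `S` and all weights equal to `2`). -/
def Admissible {l : ℕ} (D : Fin l → Derivation k (RF k l) (RF k l)) (S : Finset (Fin l))
    (α : RF k l) : Prop :=
  α ∈ Phi k l ∧ dependsOnlyOn S α ∧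
    (∑ i ∈ S, ((zv i) ^ 2 * D i α + 4 * zv i * α)) = 0 ∧
    IsHomogeneousOn S (-(2 * (S.card : ℤ))) α ∧
    ∀ J ⊆ S, ∀ n : ℤ, (n < 0 ∨ n = 1) → component J (fun _ => 2) n α = 0

/-- `α` is an indecomposable admissible function of the variables `{z_i : i ∈ S}`
(the space `R₀^{|S|}`): admissible, and all the components `(α)₀` with respect to
partitions of `S` into two nonempty parts vanish. -/
def AdmissibleInd {l : ℕ} (D : Fin l → Derivation k (RF k l) (RF k l))
    (S : Finset (Fin l)) (α : RF k l) : Prop :=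
  Admissible D S α ∧
    ∀ J ⊆ S, J ≠ ∅ → J ≠ S → component J (fun _ => 2) 0 α = 0

section Shift

variable {l : ℕ}

/-- Polynomial level substitution `z_s ↦ z_s - z_t` for `s ∈ S`. -/
def shiftAuxP (k : Type) [Field k] (l : ℕ) (S : Finset (Fin l)) (t : Fin l) :
    MvPolynomial (Fin l) k →+* MvPolynomial (Fin l) k :=
  (MvPolynomial.aeval (R := k) fun s =>
    if s ∈ S then MvPolynomial.X s - MvPolynomial.X t else MvPolynomial.X s).toRingHom

lemma shiftAuxP_injective (S : Finset (Fin l)) (t : Fin l) (ht : t ∉ S) :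
    Function.Injective (shiftAuxP k l S t) := by
  have h : ((MvPolynomial.aeval (R := k) fun s =>
      if s ∈ S then MvPolynomial.X s + MvPolynomial.X t
      else MvPolynomial.X s).toRingHom).comp (shiftAuxP k l S t) = RingHom.id _ := by
    apply MvPolynomial.ringHom_ext
    · intro r; simp [shiftAuxP]
    · intro s
      by_cases hs : s ∈ S
      · have hst : s ≠ t := fun hst => ht (hst ▸ hs)
        simp [shiftAuxP, hs, ht]
      · simp [shiftAuxP, hs]
  intro p q hpq
  have hp := DFunLike.congr_fun h p
  have hq := DFunLike.congr_fun h q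
  simp only [RingHom.comp_apply, RingHom.id_apply] at hp hq
  rw [← hp, ← hq, hpq]

/-- The shift operator substituting `z_s - z_t` for `z_s`, for all `s ∈ S`. -/
def shiftT (S : Finset (Fin l)) (t : Fin l) (ht : t ∉ S) : RF k l →+* RF k l :=
  IsFractionRing.lift
    (g := (algebraMap (MvPolynomial (Fin l) k) (RF k l)).comp (shiftAuxP k l S t))
    (fun a b hab =>
      shiftAuxP_injective S t ht (IsFractionRing.injective _ _ hab))

/-- The operator `ℰ = Σ_{s ∈ S} (-z_s⁻¹ ∂_{z_s} + 2 z_s⁻²)`. -/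
def curlyE {l : ℕ} (D : Fin l → Derivation k (RF k l) (RF k l)) (S : Finset (Fin l))
    (β : RF k l) : RF k l :=
  ∑ s ∈ S, (-((zv s)⁻¹ * D s β) + 2 * (zv s) ^ (-2 : ℤ) * β)

end Shift

end Griess

namespace Griess

/-!
In the coordinates `t = z_i - z_j` and `z_s`, `s ≠ i`, the vector field `∂_{z_i}` is `∂_t` and
`∂_{z_j}` becomes `∂_{z_j} - ∂_t`, so that `Δ*(n₁,…,n_l)` takes the form
`Σ_{s ≠ i} (z_s² ∂_{z_s} + n_s z_s) + z_j (2 t ∂_t + n_i) + t (t ∂_t + n_i)`.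
The last summand raises the order in `t`. Hence, if `α` has order at least `m` in `t` and is
annihilated by `Δ*(n₁,…,n_l)`, then its coefficient at `t^m` is regular for the same weights, except
that `n_j` is replaced by `n_j + n_i + 2m`. For `m = -2` and all weights `4`, this is again `4`.
-/

section LaurentExpansion

open HahnSeries
open scoped LaurentSeries RatFunc

/-- The coefficientwise algebra structure on Laurent series, as a local instance: the action of
the competing `HahnSeries.powerSeriesAlgebra` is not reducibly coefficientwise. -/
abbrev laurentSeriesAlgebra (R A : Type*) [CommSemiring R] [CommSemiring A] [Algebra R A] :
    Algebra R A⸨X⸩ :=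
  HahnSeries.instAlgebra

attribute [local instance] laurentSeriesAlgebra

section LaurentDerivation

section CoeffDerivation

variable {Γ R A : Type*} [PartialOrder Γ] [CommSemiring R] [CommRing A] [Algebra R A]

/-- The linear map underlying `coeffDerivation`. -/
def coeffDerivationLinearMap (d : Derivation R A A) (w : Γ → A) : A⟦Γ⟧ →ₗ[R] A⟦Γ⟧ where
  toFun f :=
    { coeff γ := d (f.coeff γ) + w γ * f.coeff γ
      isPWO_support' := f.isPWO_support.mono fun γ hγ h0 ↦ hγ (by simp [h0]) }
  map_add' f g := by
    ext γ
    simp only [coeff_add, map_add]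
    ring
  map_smul' r f := by
    ext γ
    simp [smul_add]

lemma coeffDerivationLinearMap_coeff (d : Derivation R A A) (w : Γ → A) (f : A⟦Γ⟧) (γ : Γ) :
    (coeffDerivationLinearMap d w f).coeff γ = d (f.coeff γ) + w γ * f.coeff γ :=
  rfl

lemma support_coeffDerivationLinearMap_subset (d : Derivation R A A) (w : Γ → A) (f : A⟦Γ⟧) :
    (coeffDerivationLinearMap d w f).support ⊆ f.support :=
  fun γ hγ h0 ↦ hγ (by simp [coeffDerivationLinearMap_coeff, h0])

variable [AddCommMonoid Γ] [IsOrderedCancelAddMonoid Γ]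

/-- The derivation of `A⟦Γ⟧` that acts on the monomials by `a X^γ ↦ (d a + w γ a) X^γ`. It is
the coefficientwise action of `d` for `w = 0`, and the Euler operator `X ∂_X` for `Γ = ℤ`, `d = 0`
and `w` the cast to `A`. -/
def coeffDerivation (d : Derivation R A A) (w : Γ →+ A) : Derivation R A⟦Γ⟧ A⟦Γ⟧ :=
  .mk' (coeffDerivationLinearMap d w) fun f g ↦ by
    ext γ
    rw [smul_eq_mul, smul_eq_mul, mul_comm g, coeff_add,
      coeff_mul_left' f.isPWO_support (support_coeffDerivationLinearMap_subset d w f),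
      coeff_mul_right' g.isPWO_support (support_coeffDerivationLinearMap_subset d w g),
      ← Finset.sum_add_distrib]
    simp only [coeffDerivationLinearMap_coeff, coeff_mul, map_sum, Finset.mul_sum,
      ← Finset.sum_add_distrib]
    refine Finset.sum_congr rfl fun x hx ↦ ?_
    obtain ⟨-, -, rfl⟩ := Finset.mem_antidiagonal.1 hx
    simp only [Derivation.leibniz, smul_eq_mul, map_add]
    ring

lemma coeffDerivation_coeff (d : Derivation R A A) (w : Γ →+ A) (f : A⟦Γ⟧) (γ : Γ) :
    (coeffDerivation d w f).coeff γ = d (f.coeff γ) + w γ * f.coeff γ :=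
  rfl

lemma coeffDerivation_single (d : Derivation R A A) (w : Γ →+ A) (γ : Γ) (a : A) :
    coeffDerivation d w (single γ a) = single γ (d a + w γ * a) := by
  ext δ
  rcases eq_or_ne δ γ with rfl | h
  · simp only [coeffDerivation_coeff, coeff_single_same]
  · simp only [coeffDerivation_coeff, coeff_single_of_ne h, map_zero, mul_zero, add_zero]

end CoeffDerivation

variable (R A : Type*) [CommSemiring R] [CommRing A] [Algebra R A]

/-- The derivation `∂_X = X⁻¹ (X ∂_X)` of `A⸨X⸩`; the library's `LaurentSeries.derivative` is only
a linear map. -/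
def laurentDerivation : Derivation R A⸨X⸩ A⸨X⸩ :=
  (single (-1) 1 : A⸨X⸩) • coeffDerivation 0 (Int.castAddHom A)

variable {A}

lemma laurentDerivation_coeff (f : A⸨X⸩) (m : ℤ) :
    (laurentDerivation R A f).coeff m = (m + 1) * f.coeff (m + 1) := by
  simp [laurentDerivation, coeffDerivation_coeff, coeff_single_mul]

lemma laurentDerivation_single (n : ℤ) (a : A) :
    laurentDerivation R A (single n a) = single (n - 1) (n * a) := by
  simp [laurentDerivation, coeffDerivation_single, sub_eq_neg_add]

end LaurentDerivation

section Expansion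

variable {k : Type} [Field k] {l : ℕ} (i j : Fin l)

lemma algHom_derivation_of_zv {F : Type*} [Field F] [Algebra k F] (φ : RF k l →ₐ[k] F)
    (d : Derivation k (RF k l) (RF k l)) (e : Derivation k F F)
    (h : ∀ s, φ (d (zv s)) = e (φ (zv s))) (α : RF k l) : φ (d α) = e (φ α) := by
  have hpoly (p : MvPolynomial (Fin l) k) :
      φ (d (algebraMap _ (RF k l) p)) = e (φ (algebraMap _ (RF k l) p)) := by
    induction p using MvPolynomial.induction_on with
    | C a =>
      rw [← MvPolynomial.algebraMap_eq, ← IsScalarTower.algebraMap_apply, AlgHom.commutes]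
      simp only [Derivation.map_algebraMap, map_zero]
    | add p q hp hq => simp only [map_add, hp, hq]
    | mul_X p s hp =>
      have hs := h s
      rw [zv] at hs
      simp only [map_mul, Derivation.leibniz, map_add, smul_eq_mul, hp, hs]
  obtain ⟨p, q, -, rfl⟩ := IsFractionRing.div_surjective (A := MvPolynomial (Fin l) k) α
  simp only [Derivation.leibniz_div, smul_eq_mul, map_mul, map_sub, map_pow, map_inv₀, map_div₀,
    hpoly]

lemma subPair_algebraMap (p : MvPolynomial (Fin l) k) :
    subPair i j (algebraMap _ (RF k l) p) = toRatFuncHom k l (subPairAux k l i j p) :=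
  IsFractionRing.lift_algebraMap (g := (toRatFuncHom k l).comp (subPairAux k l i j))
    (fun _ _ h ↦ subPairAux_injective i j (toRatFuncHom_injective h)) p

lemma coe_subPair_algebraMap (p : MvPolynomial (Fin l) k) :
    ((subPair i j (algebraMap _ (RF k l) p) : RatFunc (RF k l)) : (RF k l)⸨X⸩) =
      ((((subPairAux k l i j p).map (algebraMap _ (RF k l)) : Polynomial (RF k l)) :
        PowerSeries (RF k l)) : (RF k l)⸨X⸩) := by
  rw [subPair_algebraMap]
  exact (RatFunc.coe_coe _).symm

/-- The expansion of a rational function in powers of `X = z_i - z_j`, whose coefficients are the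
`rho i j m`. -/
def expansion : RF k l →ₐ[k] (RF k l)⸨X⸩ where
  toRingHom := (algebraMap (RatFunc (RF k l)) (RF k l)⸨X⸩).comp (subPair i j)
  commutes' a := by
    rw [IsScalarTower.algebraMap_apply k (MvPolynomial (Fin l) k) (RF k l)]
    refine (coe_subPair_algebraMap i j _).trans ?_
    simp [subPairAux, HahnSeries.algebraMap_apply, MvPolynomial.algebraMap_eq,
      IsScalarTower.algebraMap_apply k (MvPolynomial (Fin l) k) (RF k l)]

lemma rho_eq_coeff_expansion (m : ℤ) (α : RF k l) :
    rho i j m α = (expansion i j α).coeff m :=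
  rfl

variable {i} in
lemma expansion_zv_of_ne {s : Fin l} (hs : s ≠ i) :
    expansion i j (zv s : RF k l) = single 0 (zv s) := by
  refine (coe_subPair_algebraMap i j _).trans ?_
  simp [subPairAux, hs, zv]

lemma expansion_zv_self : expansion i j (zv i : RF k l) = single 1 1 + single 0 (zv j) := by
  refine (coe_subPair_algebraMap i j _).trans ?_
  simp [subPairAux, zv]

variable (m : ℤ)

lemma rho_zero : rho i j m (0 : RF k l) = 0 := by
  simp only [rho_eq_coeff_expansion, map_zero, coeff_zero]

lemma rho_add (α β : RF k l) : rho i j m (α + β) = rho i j m α + rho i j m β := by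
  simp only [rho_eq_coeff_expansion, map_add, coeff_add]

lemma rho_sum {ι : Type*} (S : Finset ι) (f : ι → RF k l) :
    rho i j m (∑ s ∈ S, f s) = ∑ s ∈ S, rho i j m (f s) := by
  simp only [rho_eq_coeff_expansion, map_sum, coeff_sum]

lemma rho_intCast_mul (n : ℤ) (α : RF k l) : rho i j m ((n : RF k l) * α) = n * rho i j m α := by
  simp only [rho_eq_coeff_expansion, ← zsmul_eq_mul, map_zsmul, coeff_smul]

variable {i} in
lemma rho_zv_mul_of_ne {s : Fin l} (hs : s ≠ i) (α : RF k l) :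
    rho i j m (zv s * α) = zv s * rho i j m α := by
  simp only [rho_eq_coeff_expansion, map_mul, expansion_zv_of_ne j hs, coeff_single_zero_mul]

lemma rho_zv_mul_self (α : RF k l) :
    rho i j m (zv i * α) = rho i j (m - 1) α + zv j * rho i j m α := by
  simp only [rho_eq_coeff_expansion, map_mul, expansion_zv_self, add_mul, coeff_add,
    coeff_single_mul, one_mul, sub_zero]

variable {i j} {D : Fin l → Derivation k (RF k l) (RF k l)} (hD : IsPartialDeriv D)

include hD

lemma rho_partialDeriv_of_ne (hij : i ≠ j) {s : Fin l} (hs : s ≠ i) (α : RF k l) :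
    rho i j m (D s α) =
      D s (rho i j m α) - if s = j then ((m : RF k l) + 1) * rho i j (m + 1) α else 0 := by
  let e : Derivation k (RF k l)⸨X⸩ (RF k l)⸨X⸩ :=
    coeffDerivation (D s) 0 - if s = j then laurentDerivation k (RF k l) else 0
  have hgen (r : Fin l) : expansion i j (D s (zv r)) = e (expansion i j (zv r)) := by
    rcases eq_or_ne r i with rfl | hr
    · rcases eq_or_ne s j with rfl | hsj
      · simp [e, hD _ _, hs.symm, expansion_zv_self, coeffDerivation_single,
          laurentDerivation_single]
      · simp [e, hD _ _, hs.symm, hsj, hsj.symm, expansion_zv_self, coeffDerivation_single]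
    · rcases eq_or_ne s j with rfl | hsj <;> rcases eq_or_ne r s with rfl | hrs <;>
        simp [e, hD _ _, *, expansion_zv_of_ne, coeffDerivation_single, laurentDerivation_single]
  rw [rho_eq_coeff_expansion, algHom_derivation_of_zv _ _ e hgen]
  by_cases hsj : s = j <;>
    simp [e, hsj, rho_eq_coeff_expansion, coeffDerivation_coeff, laurentDerivation_coeff]

lemma rho_partialDeriv_self (α : RF k l) :
    rho i j m (D i α) = ((m : RF k l) + 1) * rho i j (m + 1) α := by
  have hgen (r : Fin l) : expansion i j (D i (zv r)) =
      laurentDerivation k (RF k l) (expansion i j (zv r)) := by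
    rcases eq_or_ne r i with rfl | hr
    · simp [hD _ _, expansion_zv_self, laurentDerivation_single]
    · simp [hD _ _, expansion_zv_of_ne j hr, laurentDerivation_single, hr]
  rw [rho_eq_coeff_expansion, algHom_derivation_of_zv _ _ _ hgen, laurentDerivation_coeff]
  rfl

lemma rho_deltaStar (hij : i ≠ j) (n : Fin l → ℤ) (α : RF k l) :
    rho i j m (DeltaStar D n α) =
      ∑ s ∈ ({i}ᶜ : Finset (Fin l)),
          (zv s ^ 2 * D s (rho i j m α) + (n s : RF k l) * zv s * rho i j m α) +
        ((n i : RF k l) + 2 * (m : RF k l)) * zv j * rho i j m α +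
        ((n i : RF k l) + (m : RF k l) - 1) * rho i j (m - 1) α := by
  have hself : rho i j m (zv i ^ 2 * D i α + (n i : RF k l) * zv i * α) =
      zv j ^ 2 * (((m : RF k l) + 1) * rho i j (m + 1) α) +
        ((n i : RF k l) + 2 * (m : RF k l)) * zv j * rho i j m α +
        ((n i : RF k l) + (m : RF k l) - 1) * rho i j (m - 1) α := by
    simp only [rho_add, pow_two, mul_assoc, rho_intCast_mul, rho_zv_mul_self,
      rho_partialDeriv_self _ hD, sub_add_cancel, Int.cast_sub, Int.cast_one]
    ring
  have hne (s : Fin l) (hs : s ∈ ({i}ᶜ : Finset (Fin l))) :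
      rho i j m (zv s ^ 2 * D s α + (n s : RF k l) * zv s * α) =
        zv s ^ 2 * D s (rho i j m α) + (n s : RF k l) * zv s * rho i j m α -
          if s = j then zv j ^ 2 * (((m : RF k l) + 1) * rho i j (m + 1) α) else 0 := by
    have hsi : s ≠ i := by simpa using hs
    simp only [rho_add, pow_two, mul_assoc, rho_intCast_mul, rho_zv_mul_of_ne _ _ hsi,
      rho_partialDeriv_of_ne _ hD hij hsi]
    split_ifs with hsj
    · subst hsj; ring
    · ring
  rw [DeltaStar, rho_sum, Fintype.sum_eq_add_sum_compl i, hself, Finset.sum_congr rfl hne,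
    Finset.sum_sub_distrib, Finset.sum_ite_eq', if_pos (by simpa using hij.symm)]
  ring

end Expansion

end LaurentExpansion

theorem statement11_general {k : Type} [Field k] {l : ℕ}
    (D : Fin l → Derivation k (RF k l) (RF k l)) (hD : IsPartialDeriv D) (n : Fin l → ℤ)
    (α : RF k l) (hreg : DeltaStar D n α = 0) (i j : Fin l) (hij : i ≠ j) (m : ℤ)
    (hmin : rho i j (m - 1) α = 0) :
    ∑ s ∈ ({i}ᶜ : Finset (Fin l)),
      ((zv s) ^ 2 * D s (rho i j m α) +
        (Function.update n j (n i + n j + 2 * m) s : RF k l) * zv s * rho i j m α) = 0 := by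
  have hweights (s : Fin l) :
      (Function.update n j (n i + n j + 2 * m) s : RF k l) * zv s * rho i j m α =
        (n s : RF k l) * zv s * rho i j m α +
          if s = j then ((n i : RF k l) + 2 * (m : RF k l)) * zv j * rho i j m α else 0 := by
    rcases eq_or_ne s j with rfl | hsj
    · simp only [Function.update_self, if_true, Int.cast_add, Int.cast_mul, Int.cast_ofNat]
      ring
    · simp only [Function.update_of_ne hsj, if_neg hsj, add_zero]
  have hrho := rho_deltaStar m hD hij n α
  rw [hreg, hmin, rho_zero, mul_zero, add_zero] at hrho
  simp only [hweights, ← add_assoc]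
  rw [Finset.sum_add_distrib, Finset.sum_ite_eq', if_pos (by simpa using hij.symm), ← hrho]

/-- if `α ∈ Φ^l` is `(4,…,4)`-regular and `ord_{ij}α = -2`, then
`ρ^{(-2)}_{ij}α` is `(4,…,4)`-regular with respect to the `l-1` variables
`z₁,…,ẑᵢ,…,z_l`. -/
theorem statement11 {k : Type} [Field k] [CharZero k] {l : ℕ}
    (D : Fin l → Derivation k (RF k l) (RF k l)) (hD : IsPartialDeriv D)
    (α : RF k l) (hΦ : α ∈ Phi k l)
    (hreg : DeltaStar D (fun _ => 4) α = 0)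
    (i j : Fin l) (hij : i < j)
    (hord : rho i j (-2) α ≠ 0) (hmin : ∀ m : ℤ, m < -2 → rho i j m α = 0) :
    ∑ s ∈ ({i}ᶜ : Finset (Fin l)),
      ((zv s) ^ 2 * D s (rho i j (-2) α) + 4 * zv s * rho i j (-2) α) = 0 := by
  simpa using statement11_general D hD _ α hreg i j hij.ne (-2) (hmin (-2 - 1) (by norm_num))

end Griess
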